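/- arXiv:1307.0238 — 4 statements merged into one kernel-verified Lean document; each statement's English description precedes it below -/
import Mathlib

section
/- If 0 < H < 1/2, then the sequence (g_H(k))_{k≥1} is summable and Σ_{k=1}^{∞} g_H(k) = −1/2. This expresses the medium-range dependence of the increments of fractional Brownian motion for H < 1/2. -/
/-!
With `a = 2H ∈ (0, 1)`, `gH H (k + 1)` is half of a second difference of `x ↦ x ^ a`, so the partial
sums telescope to `((n + 1) ^ a - n ^ a) / 2 - 1 / 2`. The increment `(n + 1) ^ a - n ^ a` is at most
`n ^ (a - 1)` since `(1 + 1 / n) ^ a ≤ 1 + 1 / n`, hence it tends to `0`.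
Concavity of `x ↦ x ^ a` makes every term nonpositive, so convergence of the partial sums gives
summability.
-/

/-- Autocovariance at lag `k` of the unit-time increments of fractional
Brownian motion with Hurst index `H`. -/
noncomputable def gH (H : ℝ) (k : ℕ) : ℝ :=
  (1/2) * |(k : ℝ) + 1| ^ (2*H) + (1/2) * |(k : ℝ) - 1| ^ (2*H) - |(k : ℝ)| ^ (2*H)

theorem gH_succ (H : ℝ) (k : ℕ) :
    gH H (k + 1) = (1/2) * ((k : ℝ) + 2) ^ (2*H) + (1/2) * (k : ℝ) ^ (2*H)
      - ((k : ℝ) + 1) ^ (2*H) := by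
  have hk : (0 : ℝ) ≤ k := k.cast_nonneg
  unfold gH
  push_cast
  rw [abs_of_nonneg (by linarith : (0 : ℝ) ≤ (k : ℝ) + 1 + 1),
    abs_of_nonneg (by linarith : (0 : ℝ) ≤ (k : ℝ) + 1 - 1),
    abs_of_nonneg (by linarith : (0 : ℝ) ≤ (k : ℝ) + 1)]
  ring_nf

theorem gH_succ_nonpos (H : ℝ) (hH0 : 0 < H) (hH : H < 1/2) (k : ℕ) : gH H (k + 1) ≤ 0 := by
  have hk : (0 : ℝ) ≤ k := k.cast_nonneg
  have hk2 : (k : ℝ) + 2 ∈ Set.Ici (0 : ℝ) := by simp only [Set.mem_Ici]; linarith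
  have hconc := (Real.concaveOn_rpow (p := 2*H) (by linarith) (by linarith)).2
  have h := hconc hk2 (Set.mem_Ici.2 hk) (by norm_num : (0 : ℝ) ≤ 1/2)
    (by norm_num : (0 : ℝ) ≤ 1/2) (by norm_num)
  simp only [smul_eq_mul] at h
  rw [show (1/2 : ℝ) * ((k : ℝ) + 2) + 1/2 * k = k + 1 by ring] at h
  rw [gH_succ]
  linarith

theorem sum_gH_succ (H : ℝ) (hH0 : 0 < H) (n : ℕ) :
    ∑ k ∈ Finset.range n, gH H (k + 1)
      = (1/2) * (((n : ℝ) + 1) ^ (2*H) - (n : ℝ) ^ (2*H)) - 1/2 := by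
  induction n with
  | zero => simp [Real.zero_rpow (by positivity : 2*H ≠ 0)]
  | succ n ih =>
    rw [Finset.sum_range_succ, ih, gH_succ]
    push_cast
    rw [show (n : ℝ) + 1 + 1 = n + 2 by ring]
    ring

theorem rpow_succ_sub_rpow_le {a : ℝ} (ha : a ≤ 1) {n : ℕ} (hn : 0 < n) :
    ((n : ℝ) + 1) ^ a - (n : ℝ) ^ a ≤ (n : ℝ) ^ (a - 1) := by
  have hn' : (0 : ℝ) < n := by exact_mod_cast hn
  have hinv : 0 < (n : ℝ)⁻¹ := inv_pos.2 hn'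
  have h1 : (1 + (n : ℝ)⁻¹) ^ a ≤ 1 + (n : ℝ)⁻¹ := by
    simpa using Real.rpow_le_rpow_of_exponent_le (x := 1 + (n : ℝ)⁻¹) (by linarith) ha
  have h2 : ((n : ℝ) + 1) ^ a = (n : ℝ) ^ a * (1 + (n : ℝ)⁻¹) ^ a := by
    rw [← Real.mul_rpow hn'.le (by linarith)]
    congr 1
    field_simp
  have h3 := mul_le_mul_of_nonneg_left h1 (Real.rpow_nonneg hn'.le a)
  rw [h2, Real.rpow_sub_one hn'.ne', div_eq_mul_inv]
  linarith

theorem tendsto_rpow_succ_sub_rpow {a : ℝ} (ha0 : 0 ≤ a) (ha : a < 1) :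
    Filter.Tendsto (fun n : ℕ => ((n : ℝ) + 1) ^ a - (n : ℝ) ^ a) Filter.atTop (nhds 0) := by
  have hlim : Filter.Tendsto (fun n : ℕ => (n : ℝ) ^ (a - 1)) Filter.atTop (nhds 0) := by
    have h := (tendsto_rpow_neg_atTop (y := 1 - a) (by linarith)).comp
      (tendsto_natCast_atTop_atTop (R := ℝ))
    simpa [Function.comp_def] using h
  refine squeeze_zero' (Filter.Eventually.of_forall fun n => ?_) ?_ hlim
  · exact sub_nonneg.2 (Real.rpow_le_rpow n.cast_nonneg (by linarith) ha0)
  · filter_upwards [Filter.eventually_gt_atTop 0] with n hn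
    exact rpow_succ_sub_rpow_le ha.le hn

/-- For `0 < H < 1/2`, the sequence `(g_H(k))_{k ≥ 1}` is summable with
`Σ_{k=1}^{∞} g_H(k) = −1/2` (medium-range dependence). -/
theorem stmt_6 (H : ℝ) (hH0 : 0 < H) (hH : H < 1/2) :
    Summable (fun k : ℕ => gH H (k + 1))
      ∧ ∑' k : ℕ, gH H (k + 1) = -(1/2) := by
  have hlim : Filter.Tendsto (fun n : ℕ => ∑ k ∈ Finset.range n, -gH H (k + 1))
      Filter.atTop (nhds (1/2)) := by
    have h := ((tendsto_rpow_succ_sub_rpow (a := 2*H) (by linarith) (by linarith)).const_mul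
      (1/2)).sub_const (1/2)
    have h' := h.neg
    simp only [Finset.sum_neg_distrib, sum_gH_succ H hH0]
    simpa using h'
  have hneg : HasSum (fun k : ℕ => -gH H (k + 1)) (1/2) :=
    (hasSum_iff_tendsto_nat_of_nonneg
      (fun k => neg_nonneg.2 (gH_succ_nonpos H hH0 hH k)) _).2 hlim
  have hsum : HasSum (fun k : ℕ => gH H (k + 1)) (-(1/2)) := by
    simpa only [neg_neg] using hneg.neg
  exact ⟨hsum.summable, hsum.tsum_eq⟩
end

section
/- Let (x_1, v_1) = Ψ_h(x_0, v_0). Then the Radon–Nikodym factors accumulated over one advanced leapfrog step satisfy the identity G(x_1, v_1) · G(x_0, v_0 + (h/2) g(x_0)) = exp( (1/2)‖x_1‖² + (1/2)‖v_1‖² − (1/2)‖x_0‖² − (1/2)‖v_0‖² ). -/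
/-!
Each velocity kick `v ↦ v + a` changes `‖v‖²/2` by `⟨a, v + a⟩ - ‖a‖²/2`, which is exactly the
exponent of the shift density evaluated at the kicked velocity. The rotation between the two kicks
preserves `‖x‖² + ‖v‖²`, so the two exponents add up to the total change of
`‖x‖²/2 + ‖v‖²/2`. All quantities are sums over coordinates, so it suffices to verify this
coordinatewise.
-/

/-- Accumulated Radon–Nikodym factors over one advanced leapfrog step:
with `(x₁, v₁) = Ψ_h(x₀, v₀)` and
`G(x,v) = exp(⟨(h/2) g(x), v⟩ − ‖(h/2) g(x)‖²/2)` for `g = −∇Φ`,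
`G(x₁, v₁) G(x₀, v₀ + (h/2) g(x₀))
  = exp(‖x₁‖²/2 + ‖v₁‖²/2 − ‖x₀‖²/2 − ‖v₀‖²/2)`. -/
theorem stmt_16 (n : ℕ) (hn : 1 ≤ n) (h : ℝ) (hh : 0 < h)
    (Φ : (Fin n → ℝ) → ℝ) (hΦ : Differentiable ℝ Φ)
    (g : (Fin n → ℝ) → (Fin n → ℝ))
    (hg : ∀ x i, g x i = -(fderiv ℝ Φ x (Pi.single i 1)))
    (Ξ Ξt : ℝ → (Fin n → ℝ) × (Fin n → ℝ) → (Fin n → ℝ) × (Fin n → ℝ))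
    (hΞ : ∀ t x v, Ξ t (x, v) = (x, v + t • g x))
    (hΞt : ∀ t x v, Ξt t (x, v)
      = (Real.cos t • x + Real.sin t • v, (-Real.sin t) • x + Real.cos t • v))
    (Ψ : (Fin n → ℝ) × (Fin n → ℝ) → (Fin n → ℝ) × (Fin n → ℝ))
    (hΨ : Ψ = Ξ (h/2) ∘ Ξt h ∘ Ξ (h/2))
    (G : (Fin n → ℝ) → (Fin n → ℝ) → ℝ)
    (hG : ∀ x v, G x v
      = Real.exp (∑ i, (h/2 * g x i) * v i - (1/2) * ∑ i, (h/2 * g x i)^2))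
    (x0 v0 x1 v1 : Fin n → ℝ) (hstep : Ψ (x0, v0) = (x1, v1)) :
    G x1 v1 * G x0 (v0 + (h/2) • g x0)
      = Real.exp ((1/2) * ∑ i, (x1 i)^2 + (1/2) * ∑ i, (v1 i)^2
          - (1/2) * ∑ i, (x0 i)^2 - (1/2) * ∑ i, (v0 i)^2) := by
  rw [hΨ] at hstep
  simp only [Function.comp_apply, hΞ, hΞt, Prod.mk.injEq] at hstep
  obtain ⟨hx, hv⟩ := hstep
  rw [hx] at hv
  rw [hG, hG, ← Real.exp_add]
  congr 1
  simp only [Finset.mul_sum, ← Finset.sum_add_distrib, ← Finset.sum_sub_distrib]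
  refine Finset.sum_congr rfl fun i _ => ?_
  have hxi := congrFun hx i
  have hvi := congrFun hv i
  simp only [Pi.add_apply, Pi.smul_apply, smul_eq_mul] at hxi hvi ⊢
  have hcs := Real.sin_sq_add_cos_sq h
  generalize g x1 i = b at *
  rw [← hvi, ← hxi]
  -- The rotation preserves `x² + v²`: the difference of the two sides is a multiple of
  -- `sin² + cos² - 1`, the factor being half the squared norm before rotating.
  linear_combination (-(1/2) * (x0 i ^ 2 + (v0 i + h / 2 * g x0 i) ^ 2)) * hcs
end

section
/- Let n ≥ 1 and let λ denote Lebesgue measure on ℝ^n × ℝ^n. Let H : ℝ^n × ℝ^n → ℝ be measurable with exp(−H) integrable with respect to λ and with H(x, −v) = H(x, v) for all (x, v). Let T : ℝ^n × ℝ^n → ℝ^n × ℝ^n be a measurable map preserving λ and satisfying (S ∘ T) ∘ (S ∘ T) = id, where S(x, v) = (x, −v). Define the acceptance probability a(x, v) = min(1, exp(H(x, v) − H(T(x, v)))) and write π_x for the projection (x, v) ↦ x. Then for every bounded measurable f : ℝ^n → ℝ, ∫ [ a(x, v) f(π_x(T(x, v))) + (1 − a(x, v)) f(x) ] exp(−H(x,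 v)) dλ(x, v) = ∫ f(x) exp(−H(x, v)) dλ(x, v). That is, the accept–reject Markov transition built from the proposal T with acceptance probability a preserves the probability measure proportional to exp(−H(x, v)) dλ, and hence its x-marginal. -/
/-!
Write `R = S ∘ T`, a measure-preserving involution with `H ∘ S = H` and `π_x ∘ S = π_x`.
Then `a * exp (-H) = min (exp (-H)) (exp (-H ∘ R)) =: m`, which is invariant under `R`
(detailed balance). Hence `∫ m * (f ∘ π_x ∘ R) = ∫ m * (f ∘ π_x)` by the change of variables
`R`, so the mass of `f` gained by acceptance equals the mass lost, and only
`∫ (f ∘ π_x) * exp (-H)` remains.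
-/

open MeasureTheory in
/-- Invariance of the accept–reject Markov transition of hybrid Monte Carlo:
if `T` preserves Lebesgue measure `λ`, `S ∘ T` is an involution for
`S(x,v) = (x,−v)`, `H` is symmetric in the velocity with `exp(−H)` integrable,
and `a = min(1, exp(H − H∘T))`, then for every bounded measurable `f`,
`∫ [a f(π_x T) + (1−a) f(π_x)] e^{−H} dλ = ∫ f(π_x) e^{−H} dλ`. -/
theorem stmt_17 (n : ℕ) (hn : 1 ≤ n)
    (H : (Fin n → ℝ) × (Fin n → ℝ) → ℝ) (hHmeas : Measurable H)
    (hHint : Integrable (fun p => Real.exp (-H p))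
      (volume : Measure ((Fin n → ℝ) × (Fin n → ℝ))))
    (hHsym : ∀ x v, H (x, -v) = H (x, v))
    (T : (Fin n → ℝ) × (Fin n → ℝ) → (Fin n → ℝ) × (Fin n → ℝ))
    (hTmeas : Measurable T)
    (hTvol : Measure.map T volume = volume)
    (hTrev : ∀ p, (fun p : (Fin n → ℝ) × (Fin n → ℝ) => (p.1, -p.2))
        (T ((fun p : (Fin n → ℝ) × (Fin n → ℝ) => (p.1, -p.2)) (T p))) = p)
    (a : (Fin n → ℝ) × (Fin n → ℝ) → ℝ)
    (ha : ∀ p, a p = min 1 (Real.exp (H p - H (T p))))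
    (f : (Fin n → ℝ) → ℝ) (hfmeas : Measurable f)
    (hfbdd : ∃ C, ∀ x, |f x| ≤ C) :
    ∫ p, (a p * f (T p).1 + (1 - a p) * f p.1) * Real.exp (-H p)
      = ∫ p, f p.1 * Real.exp (-H p) := by
  obtain ⟨C, hC⟩ := hfbdd
  let R : (Fin n → ℝ) × (Fin n → ℝ) → (Fin n → ℝ) × (Fin n → ℝ) :=
    fun p => ((T p).1, -(T p).2)
  have hRR : ∀ p, R (R p) = p := hTrev
  have hR : MeasurePreserving R volume volume :=
    ((MeasurePreserving.id (volume : Measure (Fin n → ℝ))).prod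
      (Measure.measurePreserving_neg (volume : Measure (Fin n → ℝ)))).comp ⟨hTmeas, hTvol⟩
  have hHR : ∀ p, H (R p) = H (T p) := fun p => hHsym _ _
  let m : (Fin n → ℝ) × (Fin n → ℝ) → ℝ :=
    fun p => min (Real.exp (-H p)) (Real.exp (-H (R p)))
  have hmR : ∀ p, m (R p) = m p := by
    intro p
    simp only [m, hRR]
    exact min_comm _ _
  have ham : ∀ p, a p * Real.exp (-H p) = m p := by
    intro p
    simp only [m, ha, hHR]
    rw [min_mul_of_nonneg _ _ (Real.exp_pos _).le, one_mul, ← Real.exp_add]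
    congr 2
    ring
  have hmmeas : Measurable m :=
    (Real.measurable_exp.comp hHmeas.neg).min
      (Real.measurable_exp.comp (hHmeas.comp hR.measurable).neg)
  have hmint : Integrable m := by
    refine hHint.mono' hmmeas.aestronglyMeasurable (Filter.Eventually.of_forall fun p => ?_)
    rw [Real.norm_of_nonneg (le_min (Real.exp_pos _).le (Real.exp_pos _).le)]
    exact min_le_left _ _
  let F : (Fin n → ℝ) × (Fin n → ℝ) → ℝ := fun p => f p.1 * m p
  have hfm : Measurable fun p : (Fin n → ℝ) × (Fin n → ℝ) => f p.1 :=
    hfmeas.comp measurable_fst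
  have hFint : Integrable F :=
    hmint.bdd_mul (c := C) hfm.aestronglyMeasurable
      (Filter.Eventually.of_forall fun p => hC p.1)
  have hGint : Integrable fun p => f p.1 * Real.exp (-H p) :=
    hHint.bdd_mul (c := C) hfm.aestronglyMeasurable
      (Filter.Eventually.of_forall fun p => hC p.1)
  have hFRint : Integrable fun p => F (R p) := hR.integrable_comp_of_integrable hFint
  have hFR : ∫ p, F (R p) = ∫ p, F p := by
    have h := integral_map (μ := volume) hR.measurable.aemeasurable
      (f := F) (hfm.mul hmmeas).aestronglyMeasurable
    rw [hR.map_eq] at h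
    exact h.symm
  have key : ∀ p, (a p * f (T p).1 + (1 - a p) * f p.1) * Real.exp (-H p)
      = (F (R p) - F p) + f p.1 * Real.exp (-H p) := by
    intro p
    have h1 : F (R p) = f (T p).1 * m p := by
      simp only [F, hmR, R]
    rw [h1]
    simp only [F, ← ham]
    ring
  have hDint : Integrable fun p => F (R p) - F p := hFRint.sub hFint
  simp_rw [key]
  rw [integral_add hDint hGint, integral_sub hFRint hFint, hFR, sub_self, zero_add]
end

section
/- Let μ be the countable product measure on ℝ^ℕ (functions ℕ → ℝ) of standard Gaussian measures N(0,1), and let m : ℕ → ℝ satisfy Σ_{i∈ℕ} m(i)² < ∞ (i.e. the sequence of squares is summable). Then the pushforward of μ under the translation x ↦ x + m and μ are mutually absolutely continuous (equivalent measures). -/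
/-!
The translate of a `k`-dimensional standard Gaussian by `a` has density
`∏ i, exp (a i * x i - (a i)² / 2)` with respect to the untranslated one, and the square of this
density has integral `exp (∑ i, (a i)²)`. By the Cauchy–Schwarz inequality, with `ν` the translate
of `μ` by `m`, every measurable cylinder `t` satisfies `ν t ≤ exp (∑ i, (m i)²) ^ (1/2) * μ t ^ (1/2)`,
where the constant does not depend on the number of coordinates (`map_add_cylinder_le`).

Cylinders form a ring generating the product `σ`-algebra, so a `μ`-null set is approximated by
cylinders up to arbitrarily small `μ + ν`-measure, and the bound forces it to be `ν`-null
(`map_add_absolutelyContinuous`). The converse absolute continuity is the same statement for `-m`,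
pushed forward by the translation by `m`.
-/

open MeasureTheory ProbabilityTheory Filter Topology
open scoped ENNReal NNReal symmDiff

/-- The density of `N(a, 1)` with respect to `N(0, 1)`. -/
noncomputable def shiftDensity (a x : ℝ) : ℝ≥0∞ := ENNReal.ofReal (Real.exp (a * x - a ^ 2 / 2))

@[fun_prop]
lemma measurable_shiftDensity (a : ℝ) : Measurable (shiftDensity a) := by
  unfold shiftDensity
  fun_prop

lemma gaussianReal_eq_withDensity_shiftDensity (a : ℝ) :
    gaussianReal a 1 = (gaussianReal 0 1).withDensity (shiftDensity a) := by
  rw [gaussianReal_of_var_ne_zero _ one_ne_zero, gaussianReal_of_var_ne_zero _ one_ne_zero,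
    ← withDensity_mul _ (measurable_gaussianPDF 0 1) (measurable_shiftDensity a)]
  congr 1
  ext x
  rw [Pi.mul_apply, gaussianPDF, gaussianPDF, shiftDensity,
    ← ENNReal.ofReal_mul (gaussianPDFReal_nonneg _ _ _), gaussianPDFReal, gaussianPDFReal,
    mul_assoc (√_)⁻¹, ← Real.exp_add]
  congr 3
  simp only [NNReal.coe_one]
  ring

lemma lintegral_shiftDensity_sq (a : ℝ) :
    ∫⁻ x, shiftDensity a x ^ (2 : ℝ) ∂gaussianReal 0 1 = ENNReal.ofReal (Real.exp (a ^ 2)) := by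
  have h (x : ℝ) : shiftDensity a x ^ (2 : ℝ)
      = ENNReal.ofReal (Real.exp (-a ^ 2)) * ENNReal.ofReal (Real.exp ((2 * a) * x)) := by
    rw [shiftDensity, ENNReal.ofReal_rpow_of_nonneg (Real.exp_nonneg _) (by norm_num),
      ← ENNReal.ofReal_mul (Real.exp_nonneg _), ← Real.exp_add, ← Real.exp_mul]
    congr 2
    ring
  have hmgf := congrFun (mgf_fun_id_gaussianReal (μ := 0) (v := 1)) (2 * a)
  simp only [mgf] at hmgf
  simp_rw [h]
  rw [lintegral_const_mul _ (by fun_prop),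
    ← ofReal_integral_eq_lintegral_ofReal (integrable_exp_mul_gaussianReal _)
      (Eventually.of_forall fun x ↦ Real.exp_nonneg _), hmgf,
    ← ENNReal.ofReal_mul (Real.exp_nonneg _), ← Real.exp_add]
  congr 2
  simp only [NNReal.coe_one]
  ring

/-- Tonelli's theorem for a product of functions of separate coordinates. -/
lemma lintegral_pi_prod {ι : Type*} [Fintype ι] (ρ : ι → Measure ℝ)
    [∀ i, IsProbabilityMeasure (ρ i)] (f : ι → ℝ → ℝ≥0∞) (hf : ∀ i, Measurable (f i)) :
    ∫⁻ x, ∏ i, f i (x i) ∂Measure.pi ρ = ∏ i, ∫⁻ y, f i y ∂ρ i := by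
  rw [lintegral_prod_eq_prod_lintegral_of_indepFun Finset.univ (fun i (x : ι → ℝ) ↦ f i (x i))
    (iIndepFun_pi fun i ↦ (hf i).aemeasurable) (fun i ↦ (hf i).comp (measurable_pi_apply i))]
  exact Finset.prod_congr rfl fun i _ ↦ (measurePreserving_eval ρ i).lintegral_comp (hf i)

lemma pi_gaussianReal_eq_withDensity {ι : Type*} [Fintype ι] (a : ι → ℝ) :
    Measure.pi (fun i ↦ gaussianReal (a i) 1)
      = (Measure.pi fun _ : ι ↦ gaussianReal 0 1).withDensity
          (fun x ↦ ∏ i, shiftDensity (a i) (x i)) := by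
  refine Measure.pi_eq fun s hs ↦ ?_
  have hind (x : ι → ℝ) : (Set.univ.pi s).indicator (fun x ↦ ∏ i, shiftDensity (a i) (x i)) x
      = ∏ i, (s i).indicator (shiftDensity (a i)) (x i) := by
    classical
    by_cases hx : x ∈ Set.univ.pi s
    · rw [Set.indicator_of_mem hx]
      exact Finset.prod_congr rfl fun i _ ↦ (Set.indicator_of_mem (hx i trivial) _).symm
    · rw [Set.indicator_of_notMem hx]
      obtain ⟨i, hi⟩ : ∃ i, x i ∉ s i := by simpa using hx
      exact (Finset.prod_eq_zero (Finset.mem_univ i) (Set.indicator_of_notMem hi _)).symm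
  rw [withDensity_apply _ (MeasurableSet.univ_pi hs),
    ← lintegral_indicator (MeasurableSet.univ_pi hs)]
  simp_rw [hind]
  rw [lintegral_pi_prod _ _ fun i ↦ (measurable_shiftDensity _).indicator (hs i)]
  refine Finset.prod_congr rfl fun i _ ↦ ?_
  rw [gaussianReal_eq_withDensity_shiftDensity (a i), withDensity_apply _ (hs i),
    lintegral_indicator (hs i)]

/-- The Cauchy–Schwarz bound on the measure of a set under a translated Gaussian. -/
lemma pi_gaussianReal_le {ι : Type*} [Fintype ι] (a : ι → ℝ) {B : Set (ι → ℝ)}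
    (hB : MeasurableSet B) :
    Measure.pi (fun i ↦ gaussianReal (a i) 1) B
      ≤ ENNReal.ofReal (Real.exp (∑ i, a i ^ 2)) ^ (1 / 2 : ℝ)
        * (Measure.pi fun _ : ι ↦ gaussianReal 0 1) B ^ (1 / 2 : ℝ) := by
  set γ := Measure.pi fun _ : ι ↦ gaussianReal 0 1
  have hmeas : Measurable fun x : ι → ℝ ↦ ∏ i, shiftDensity (a i) (x i) := by fun_prop
  have hL : ∫⁻ x, (∏ i, shiftDensity (a i) (x i)) ^ (2 : ℝ) ∂γ
      = ENNReal.ofReal (Real.exp (∑ i, a i ^ 2)) := by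
    simp_rw [← ENNReal.prod_rpow_of_nonneg (show (0 : ℝ) ≤ 2 by norm_num)]
    rw [lintegral_pi_prod _ (fun i y ↦ shiftDensity (a i) y ^ (2 : ℝ)) (by fun_prop),
      Real.exp_sum, ENNReal.ofReal_prod_of_nonneg fun i _ ↦ Real.exp_nonneg _]
    exact Finset.prod_congr rfl fun i _ ↦ lintegral_shiftDensity_sq (a i)
  have hone : ∫⁻ x, B.indicator (1 : (ι → ℝ) → ℝ≥0∞) x ^ (2 : ℝ) ∂γ = γ B := by
    rw [← lintegral_indicator_one hB]
    refine lintegral_congr fun x ↦ ?_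
    by_cases hx : x ∈ B <;> simp [hx]
  have hH := ENNReal.lintegral_mul_le_Lp_mul_Lq γ Real.HolderConjugate.two_two hmeas.aemeasurable
    ((measurable_one.indicator hB).aemeasurable (f := B.indicator (1 : (ι → ℝ) → ℝ≥0∞)))
  rw [hL, hone] at hH
  refine le_trans (le_of_eq ?_) hH
  rw [pi_gaussianReal_eq_withDensity, withDensity_apply _ hB, ← lintegral_indicator hB]
  refine lintegral_congr fun x ↦ ?_
  by_cases hx : x ∈ B <;> simp [hx]

/-- The dimension-free bound: the constant is the same for all measurable cylinders. -/
lemma map_add_cylinder_le (μ : Measure (ℕ → ℝ))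
    (hμ : ∀ k : ℕ, Measure.map (fun x : ℕ → ℝ => fun i : Fin k => x i) μ
        = Measure.pi fun _ : Fin k => gaussianReal 0 1)
    (m : ℕ → ℝ) (hm : Summable fun i => (m i) ^ 2) {t : Set (ℕ → ℝ)}
    (ht : t ∈ measurableCylinders fun _ : ℕ ↦ ℝ) :
    Measure.map (fun x => x + m) μ t
      ≤ ENNReal.ofReal (Real.exp (∑' i, m i ^ 2)) ^ (1 / 2 : ℝ) * μ t ^ (1 / 2 : ℝ) := by
  -- `t` is the preimage of some `B` under the projection to the first `k` coordinates.
  obtain ⟨k, B, hB, rfl⟩ : ∃ (k : ℕ) (B : Set (Fin k → ℝ)), MeasurableSet B ∧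
      t = (fun x : ℕ → ℝ => fun i : Fin k => x i) ⁻¹' B := by
    obtain ⟨s, S, hS, rfl⟩ := (mem_measurableCylinders t).1 ht
    have hlt (i : s) : (i : ℕ) < s.sup id + 1 :=
      Nat.lt_succ_of_le (Finset.le_sup (f := id) i.2)
    refine ⟨s.sup id + 1, (fun y (i : s) ↦ y ⟨i, hlt i⟩) ⁻¹' S, ?_, rfl⟩
    exact hS.preimage (measurable_pi_lambda _ fun i ↦ measurable_pi_apply _)
  have hproj : Measurable fun x : ℕ → ℝ => fun i : Fin k => x i :=
    measurable_pi_lambda _ fun i ↦ measurable_pi_apply _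
  have hadd : Measurable fun x : ℕ → ℝ => x + m := measurable_id.add_const m
  have hmap : Measure.map (fun x : ℕ → ℝ => fun i : Fin k => x i) (Measure.map (fun x => x + m) μ)
      = Measure.pi fun i : Fin k ↦ gaussianReal (m i) 1 := by
    have hpi := Measure.pi_map_pi (μ := fun _ : Fin k ↦ gaussianReal 0 1)
      (f := fun i y ↦ y + m i)
      (hμ := fun i ↦ by rw [gaussianReal_map_add_const]; infer_instance) (by fun_prop)
    simp only [gaussianReal_map_add_const, zero_add] at hpi
    rw [← hpi, ← hμ k, Measure.map_map hproj hadd, Measure.map_map (by fun_prop) hproj]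
    rfl
  rw [← Measure.map_apply hproj hB, ← Measure.map_apply hproj hB, hmap, hμ k]
  refine (pi_gaussianReal_le _ hB).trans ?_
  gcongr
  rw [Fin.sum_univ_eq_sum_range (fun i ↦ m i ^ 2) k]
  exact hm.sum_le_tsum _ fun i _ ↦ sq_nonneg _

lemma map_add_absolutelyContinuous (μ : Measure (ℕ → ℝ)) [IsProbabilityMeasure μ]
    (hμ : ∀ k : ℕ, Measure.map (fun x : ℕ → ℝ => fun i : Fin k => x i) μ
        = Measure.pi fun _ : Fin k => gaussianReal 0 1)
    (m : ℕ → ℝ) (hm : Summable fun i => (m i) ^ 2) :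
    Measure.map (fun x => x + m) μ ≪ μ := by
  refine Measure.AbsolutelyContinuous.mk fun s hs h0 ↦ ?_
  have hadd : Measurable fun x : ℕ → ℝ => x + m := measurable_id.add_const m
  set ν := Measure.map (fun x => x + m) μ with hν
  have : IsProbabilityMeasure ν := Measure.isProbabilityMeasure_map hadd.aemeasurable
  set K : ℝ≥0∞ := ENNReal.ofReal (Real.exp (∑' i, m i ^ 2)) ^ (1 / 2 : ℝ) with hK
  have hKtop : K ≠ ∞ := ENNReal.rpow_ne_top_of_nonneg (by norm_num) ENNReal.ofReal_ne_top
  have key : ∀ ε : ℝ≥0∞, 0 < ε → ν s ≤ K * ε ^ (1 / 2 : ℝ) + ε := by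
    intro ε hε
    obtain ⟨t, ht, hlt⟩ := exists_measure_symmDiff_lt_of_generateFrom_isSetRing (μ := μ + ν)
      (isSetRing_measurableCylinders (α := fun _ : ℕ ↦ ℝ))
      ⟨{Set.univ}, Set.countable_singleton _,
        by simpa using univ_mem_measurableCylinders (fun _ : ℕ ↦ ℝ), by simp⟩
      generateFrom_measurableCylinders.symm hs hε
    have hμt : μ t ≤ ε := calc
      μ t ≤ μ (s ∪ t ∆ s) := measure_mono fun x hx ↦ by
        by_cases hxs : x ∈ s
        · exact Or.inl hxs
        · exact Or.inr (Or.inl ⟨hx, hxs⟩)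
      _ ≤ μ s + μ (t ∆ s) := measure_union_le _ _
      _ ≤ (μ + ν) (t ∆ s) := by rw [h0, zero_add]; exact le_self_add
      _ ≤ ε := hlt.le
    calc
      ν s ≤ ν (t ∪ t ∆ s) := measure_mono fun x hx ↦ by
        by_cases hxt : x ∈ t
        · exact Or.inl hxt
        · exact Or.inr (Or.inr ⟨hx, hxt⟩)
      _ ≤ ν t + ν (t ∆ s) := measure_union_le _ _
      _ ≤ K * μ t ^ (1 / 2 : ℝ) + (μ + ν) (t ∆ s) :=
        add_le_add (map_add_cylinder_le μ hμ m hm ht) le_add_self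
      _ ≤ K * ε ^ (1 / 2 : ℝ) + ε := by gcongr
  have hlim : Tendsto (fun ε : ℝ≥0∞ ↦ K * ε ^ (1 / 2 : ℝ) + ε) (𝓝[>] 0) (𝓝 0) := by
    have hcont : Continuous fun ε : ℝ≥0∞ ↦ K * ε ^ (1 / 2 : ℝ) + ε :=
      ((ENNReal.continuous_const_mul hKtop).comp ENNReal.continuous_rpow_const).add continuous_id
    have h := hcont.tendsto 0
    simp only [ENNReal.zero_rpow_of_pos (show (0 : ℝ) < 1 / 2 by norm_num), mul_zero,
      add_zero] at h
    exact h.mono_left nhdsWithin_le_nhds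
  exact le_antisymm (ge_of_tendsto hlim (eventually_mem_nhdsWithin.mono key)) zero_le

open MeasureTheory ProbabilityTheory in
/-- Cameron–Martin for the countable product of standard Gaussians: if
`μ` is the product of standard Gaussian measures on `ℝ^ℕ` (characterized by
its finite-dimensional marginals) and `m ∈ ℓ²`, then the pushforward of `μ`
under the translation `x ↦ x + m` and `μ` are mutually absolutely
continuous. -/
theorem stmt_18 (μ : Measure (ℕ → ℝ)) [IsProbabilityMeasure μ]
    (hμ : ∀ k : ℕ,
      Measure.map (fun x : ℕ → ℝ => fun i : Fin k => x i) μ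
        = Measure.pi fun _ : Fin k => gaussianReal 0 1)
    (m : ℕ → ℝ) (hm : Summable fun i => (m i)^2) :
    Measure.map (fun x => x + m) μ ≪ μ
      ∧ μ ≪ Measure.map (fun x => x + m) μ := by
  refine ⟨map_add_absolutelyContinuous μ hμ m hm, ?_⟩
  have hneg : Summable fun i => ((-m) i) ^ 2 := by simpa using hm
  have hadd (c : ℕ → ℝ) : Measurable fun x : ℕ → ℝ => x + c := measurable_id.add_const c
  have h := (map_add_absolutelyContinuous μ hμ (-m) hneg).map (hadd m)
  rw [Measure.map_map (hadd m) (hadd (-m))] at h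
  have hid : (fun x : ℕ → ℝ => x + m) ∘ (fun x => x + -m) = id := by
    ext x
    simp
  rwa [hid, Measure.map_id] at h
end
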